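/- Let n ≥ 4 and let G be an n×n real matrix with zero diagonal, all off-diagonal entries equal to ±1, Gᵀ = −G, G³ = −nG, and rank G = n − 1 (for example, the Gram matrix of a d×(d+1) equiangular tight frame in ℝ_S^d scaled so that its off-diagonal entries are ±1, with n = d+1). Then the number of 4-element subsets s of {1,…,n} for which the 4×4 principal submatrix of G indexed by s has determinant 9 equals n(n−1)(n−3)(n+1)/96. -/

import Mathlib

open Matrix

noncomputable section

/-- The number of diamonds of the tournament with Seidel adjacency matrix `S`: the number
of 4-element index subsets whose principal submatrix of `S` has determinant 9. -/
noncomputable def diamondCount {n : ℕ} (S : Matrix (Fin n) (Fin n) ℝ) : ℕ :=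
  Set.ncard {s : Finset (Fin n) | s.card = 4 ∧
    (S.submatrix (fun i : s => (i : Fin n)) (fun j : s => (j : Fin n))).det = 9}

lemma aux_pf (a b c d e g : ℝ) (ha : a = 1 ∨ a = -1) (hb : b = 1 ∨ b = -1) (hc : c = 1 ∨ c = -1)
    (hd : d = 1 ∨ d = -1) (he : e = 1 ∨ e = -1) (hg : g = 1 ∨ g = -1) :
    ((a * g - b * e + c * d) ^ 2 = 1 ∨ (a * g - b * e + c * d) ^ 2 = 9) ∧
    (a * g - b * e + c * d) ^ 2 =
      3 - 2 * (a * d * g * (-c) + b * (-d) * e * (-c) + a * e * (-g) * (-b)) := by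
  rcases ha with rfl | rfl <;> rcases hb with rfl | rfl <;> rcases hc with rfl | rfl <;>
  rcases hd with rfl | rfl <;> rcases he with rfl | rfl <;> rcases hg with rfl | rfl <;>
  norm_num

lemma aux_fiber {n : ℕ} (s : Finset (Fin n)) (hs : s.card = 4) :
    (Finset.univ.filter (fun f : Fin 4 → Fin n =>
      Function.Injective f ∧ Finset.univ.image f = s)).card = 24 := by
  classical
  let e : s ≃ Fin 4 := s.equivFinOfCardEq hs
  have : (Finset.univ : Finset (Equiv.Perm (Fin 4))).card = 24 := by
    rw [Finset.card_univ, Fintype.card_perm]; rfl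
  rw [← this]
  symm
  apply Finset.card_bij (fun σ _ => fun i => ((e.symm (σ i) : s) : Fin n))
  · intro σ _
    simp only [Finset.mem_filter, Finset.mem_univ, true_and]
    refine ⟨fun a b h => ?_, ?_⟩
    · exact σ.injective (e.symm.injective (Subtype.ext h))
    · ext x
      simp only [Finset.mem_image, Finset.mem_univ, true_and]
      constructor
      · rintro ⟨a, rfl⟩
        exact (e.symm (σ a)).2
      · intro hx
        exact ⟨σ.symm (e ⟨x, hx⟩), by simp⟩
  · intro σ _ τ _ h
    ext i : 1
    exact e.symm.injective (Subtype.ext (congrFun h i))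
  · intro f hf
    simp only [Finset.mem_filter, Finset.mem_univ, true_and] at hf
    obtain ⟨hi, him⟩ := hf
    have hm : ∀ i, f i ∈ s := fun i => by
      rw [← him]; exact Finset.mem_image_of_mem _ (Finset.mem_univ _)
    have hinj : Function.Injective (fun i => e ⟨f i, hm i⟩) := by
      intro a b h
      have := e.injective h
      exact hi (by simpa using this)
    refine ⟨Equiv.ofBijective _ (Finite.injective_iff_bijective.mp hinj), Finset.mem_univ _, ?_⟩
    funext i
    simp

lemma aux_sum {n : ℕ} (g : Finset (Fin n) → ℝ) :
    ∑ f ∈ Finset.univ.filter (fun f : Fin 4 → Fin n => Function.Injective f),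
      g (Finset.univ.image f) = 24 * ∑ s ∈ Finset.powersetCard 4 Finset.univ, g s := by
  classical
  rw [← Finset.sum_fiberwise_of_maps_to (t := Finset.powersetCard 4 Finset.univ)
    (g := fun f : Fin 4 → Fin n => Finset.univ.image f)]
  · rw [Finset.mul_sum]
    apply Finset.sum_congr rfl
    intro s hs
    rw [Finset.sum_congr rfl (g := fun _ => g s), Finset.sum_const, Finset.filter_filter,
      aux_fiber s (Finset.mem_powersetCard.mp hs).2]
    · simp
    · intro f hf
      rw [(Finset.mem_filter.mp hf).2]
  · intro f hf
    have := (Finset.mem_filter.mp hf).2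
    rw [Finset.mem_powersetCard]
    refine ⟨Finset.subset_univ _, ?_⟩
    rw [Finset.card_image_of_injective _ this]; simp

lemma aux_tuple {n : ℕ} (F : Fin n → Fin n → Fin n → Fin n → ℝ) :
    ∑ f : Fin 4 → Fin n, F (f 0) (f 1) (f 2) (f 3) = ∑ i, ∑ j, ∑ k, ∑ l, F i j k l := by
  let e : (Fin 4 → Fin n) ≃ Fin n × Fin n × Fin n × Fin n :=
    { toFun := fun f => (f 0, f 1, f 2, f 3)
      invFun := fun p => ![p.1, p.2.1, p.2.2.1, p.2.2.2]
      left_inv := fun f => by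
        funext i; fin_cases i <;> rfl
      right_inv := fun p => rfl }
  rw [Fintype.sum_equiv e (fun f => F (f 0) (f 1) (f 2) (f 3))
    (fun p => F p.1 p.2.1 p.2.2.1 p.2.2.2) (fun f => rfl)]
  simp only [Fintype.sum_prod_type]

lemma aux_inj {n : ℕ} (f : Fin 4 → Fin n) : Function.Injective f ↔
    (f 0 ≠ f 1 ∧ f 0 ≠ f 2 ∧ f 0 ≠ f 3 ∧ f 1 ≠ f 2 ∧ f 1 ≠ f 3 ∧ f 2 ≠ f 3) := by
  constructor
  · intro h
    refine ⟨?_, ?_, ?_, ?_, ?_, ?_⟩ <;> exact fun hh => absurd (h hh) (by decide)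
  · rintro ⟨h1, h2, h3, h4, h5, h6⟩ a b h
    fin_cases a <;> fin_cases b <;> simp_all

def cyc {n : ℕ} (G : Matrix (Fin n) (Fin n) ℝ) (i j k l : Fin n) : ℝ :=
  if (i ≠ j ∧ i ≠ k ∧ i ≠ l ∧ j ≠ k ∧ j ≠ l ∧ k ≠ l) then G i j * G j k * G k l * G l i else 0

lemma aux_det {n : ℕ} (G : Matrix (Fin n) (Fin n) ℝ)
    (hdiag : ∀ i, G i i = 0) (hs : ∀ i j, G i j = - G j i) (f : Fin 4 → Fin n) :
    (G.submatrix f f).det = (G (f 0) (f 1) * G (f 2) (f 3) - G (f 0) (f 2) * G (f 1) (f 3)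
      + G (f 0) (f 3) * G (f 1) (f 2))^2 := by
  rw [Matrix.det_succ_row_zero]
  simp [Fin.sum_univ_succ, Matrix.det_fin_three, Fin.succAbove, hdiag]
  rw [hs (f 1) (f 0), hs (f 2) (f 0), hs (f 3) (f 0), hs (f 2) (f 1), hs (f 3) (f 1),
    hs (f 3) (f 2)]
  ring

lemma aux_det_image {n : ℕ} (G : Matrix (Fin n) (Fin n) ℝ) (f : Fin 4 → Fin n)
    (hf : Function.Injective f) (s : Finset (Fin n)) (h : Finset.univ.image f = s) :
    (G.submatrix (fun i : s => (i : Fin n)) (fun j : s => (j : Fin n))).det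
      = (G.submatrix f f).det := by
  classical
  subst h
  have hb : Function.Bijective (fun i : Fin 4 =>
      (⟨f i, Finset.mem_image_of_mem _ (Finset.mem_univ _)⟩ : (Finset.univ.image f : Finset _))) := by
    constructor
    · intro a b h
      exact hf (by simpa using h)
    · rintro ⟨x, hx⟩
      obtain ⟨a, _, rfl⟩ := Finset.mem_image.mp hx
      exact ⟨a, rfl⟩
  rw [← Matrix.det_submatrix_equiv_self (Equiv.ofBijective _ hb)]
  rfl

lemma aux_cycsum {n : ℕ} (G : Matrix (Fin n) (Fin n) ℝ)
    (hdiag : ∀ i, G i i = 0)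
    (hoff : ∀ i j, i ≠ j → G i j = 1 ∨ G i j = -1)
    (hs : ∀ i j, G i j = - G j i)
    (hcube : G * G * G = (-(n : ℝ)) • G) :
    ∑ i, ∑ j, ∑ k, ∑ l, cyc G i j k l = (n : ℝ) * (n - 1) * (3 - n) := by
  have hsq : ∀ i j, G i j ^ 2 = 1 - if i = j then 1 else 0 := by
    intro i j
    by_cases h : i = j
    · simp [h, hdiag]
    · rcases hoff i j h with h' | h' <;> simp [h, h']
  have hrow : ∀ i, ∑ j, G i j ^ 2 = (n : ℝ) - 1 := by
    intro i; simp [hsq]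
  have hcol : ∀ j, ∑ i, G i j ^ 2 = (n : ℝ) - 1 := by
    intro i; simp [hsq]
  have hpt : ∀ i j k l, cyc G i j k l = G i j * G j k * G k l * G l i
      - (if i = k then G i j ^ 2 * G i l ^ 2 else 0)
      - (if j = l then G i j ^ 2 * G j k ^ 2 else 0)
      + (if i = k then (if j = l then G i j ^ 2 else 0) else 0) := by
    intro i j k l
    unfold cyc
    by_cases hij : i = j
    · subst hij; simp [hdiag]
    by_cases hjk : j = k
    · subst hjk; simp [hdiag, hij]
    by_cases hkl : k = l
    · subst hkl; simp [hdiag, hjk]; intro h; simp [h, hdiag]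
    by_cases hil : i = l
    · subst hil; simp [hdiag, Ne.symm hij]
    have h1 := hsq i j
    simp only [hij, if_false, sub_zero] at h1
    by_cases hik : i = k <;> by_cases hjl : j = l
    · subst hik hjl
      simp; rw [hs j i]; linear_combination (G i j ^ 2) * h1
    · subst hik
      simp [hjl]; rw [hs j i, hs l i]; ring
    · subst hjl
      simp [hik]; rw [hs k j, hs j i]; ring
    · simp [hij, hik, hil, hjk, hjl, hkl]
  have htr : ∑ i, ∑ j, ∑ k, ∑ l, G i j * G j k * G k l * G l i = (n : ℝ) ^ 2 * (n - 1) := by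
    have h : ∀ i l, ∑ j, ∑ k, G i j * G j k * G k l = -(n : ℝ) * G i l := by
      intro i l
      have := congrFun (congrFun hcube i) l
      simp only [Matrix.mul_apply, Matrix.smul_apply, smul_eq_mul] at this
      rw [← this, Finset.sum_comm]
      simp only [Finset.sum_mul]
    have : ∀ i, ∑ j, ∑ k, ∑ l, G i j * G j k * G k l * G l i = (n : ℝ) * (n - 1) := by
      intro i
      calc _ = ∑ l, (∑ j, ∑ k, G i j * G j k * G k l) * G l i := by
            simp only [Finset.sum_mul]
            rw [Finset.sum_congr rfl (fun j _ => Finset.sum_comm), Finset.sum_comm]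
        _ = ∑ l, (n : ℝ) * G i l ^ 2 := by
            refine Finset.sum_congr rfl (fun l _ => ?_)
            rw [h, hs l i]; ring
        _ = _ := by rw [← Finset.mul_sum, hrow]
    simp only [this]; simp; ring
  simp only [hpt, Finset.sum_add_distrib, Finset.sum_sub_distrib, htr]
  have e1 : ∑ i, ∑ j, ∑ k, ∑ l, (if i = k then G i j ^ 2 * G i l ^ 2 else 0)
      = (n : ℝ) * (n - 1) ^ 2 := by
    have : ∀ i j k, ∑ l, (if i = k then G i j ^ 2 * G i l ^ 2 else 0)
        = if i = k then G i j ^ 2 * ((n : ℝ) - 1) else 0 := by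
      intro i j k
      split_ifs
      · rw [← Finset.mul_sum, hrow]
      · simp
    simp only [this, Finset.sum_ite_eq, Finset.mem_univ, if_true, ← Finset.sum_mul, hrow]
    simp; ring
  have e2 : ∑ i, ∑ j, ∑ k, ∑ l, (if j = l then G i j ^ 2 * G j k ^ 2 else 0)
      = (n : ℝ) * (n - 1) ^ 2 := by
    simp only [Finset.sum_ite_eq, Finset.mem_univ, if_true, ← Finset.mul_sum, ← Finset.sum_mul, hrow]
    simp; ring
  have e3 : ∑ i, ∑ j, ∑ k, ∑ l, (if i = k then (if j = l then G i j ^ 2 else 0) else 0)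
      = (n : ℝ) * (n - 1) := by
    have : ∀ i j k, ∑ l, (if i = k then (if j = l then G i j ^ 2 else 0) else 0)
        = if i = k then G i j ^ 2 else 0 := by
      intro i j k
      split_ifs <;> simp
    simp only [this, Finset.sum_ite_eq, Finset.mem_univ, if_true, hrow]
    simp; ring
  rw [e1, e2, e3]; ring

/-- if `G` is an `n × n` Seidel adjacency matrix (zero diagonal, `±1`
off-diagonal entries, skew-symmetric) with `G³ = -nG` and `rank G = n - 1` (as for the
scaled Gram matrix of a `d × (d+1)` ETF in `ℝ_S^d`, `n = d + 1`), then the number of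
diamonds equals `n(n-1)(n-3)(n+1)/96`. -/
theorem diamond_count_of_etf_gram (n : ℕ) (hn : 4 ≤ n)
    (G : Matrix (Fin n) (Fin n) ℝ)
    (hdiag : ∀ i, G i i = 0)
    (hoff : ∀ i j, i ≠ j → G i j = 1 ∨ G i j = -1)
    (hskew : Gᵀ = -G)
    (hcube : G * G * G = (-(n : ℝ)) • G)
    (hrank : G.rank = n - 1) :
    (diamondCount G : ℝ) =
      (n : ℝ) * ((n : ℝ) - 1) * ((n : ℝ) - 3) * ((n : ℝ) + 1) / 96 := by
  classical
  have hs : ∀ i j, G i j = - G j i := by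
    intro i j
    have := congrFun (congrFun hskew j) i
    simpa using this
  let D : Finset (Fin n) → ℝ := fun s =>
    (G.submatrix (fun i : s => (i : Fin n)) (fun j : s => (j : Fin n))).det
  have hpf : ∀ f : Fin 4 → Fin n, Function.Injective f →
      (D (Finset.univ.image f) = 1 ∨ D (Finset.univ.image f) = 9) ∧
      D (Finset.univ.image f) = 3 - 2 * (cyc G (f 0) (f 1) (f 2) (f 3)
        + cyc G (f 0) (f 2) (f 1) (f 3) + cyc G (f 0) (f 1) (f 3) (f 2)) := by
    intro f hf
    have hD : D (Finset.univ.image f) = _ := aux_det_image G f hf _ rfl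
    rw [hD, aux_det G hdiag hs]
    obtain ⟨h1, h2, h3, h4, h5, h6⟩ := (aux_inj f).mp hf
    unfold cyc
    rw [if_pos ⟨h1, h2, h3, h4, h5, h6⟩, if_pos ⟨h2, h1, h3, h4.symm, h6, h5⟩,
      if_pos ⟨h1, h3, h2, h5, h4, h6.symm⟩]
    rw [hs (f 2) (f 1), hs (f 3) (f 2), hs (f 3) (f 0), hs (f 2) (f 0)]
    exact aux_pf _ _ _ _ _ _ (hoff _ _ h1) (hoff _ _ h2) (hoff _ _ h3) (hoff _ _ h4)
      (hoff _ _ h5) (hoff _ _ h6)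
  have hD9 : ∀ s ∈ Finset.powersetCard 4 (Finset.univ : Finset (Fin n)),
      (if D s = 9 then (1 : ℝ) else 0) = (D s - 1) / 8 := by
    intro s hs'
    have hc := aux_fiber s (Finset.mem_powersetCard.mp hs').2
    obtain ⟨f, hf⟩ := Finset.card_pos.mp (by rw [hc]; norm_num)
    obtain ⟨_, hf1, rfl⟩ := Finset.mem_filter.mp hf
    rcases (hpf f hf1).1 with h | h <;> rw [h] <;> norm_num
  have hcount : (diamondCount G : ℝ)
      = ∑ s ∈ Finset.powersetCard 4 (Finset.univ : Finset (Fin n)), (D s - 1) / 8 := by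
    rw [← Finset.sum_congr rfl hD9, Finset.sum_boole]
    unfold diamondCount
    rw [← Set.ncard_coe_finset]
    congr 2
    ext s
    simp [D, Finset.mem_powersetCard]
  have hN : ∑ s ∈ Finset.powersetCard 4 (Finset.univ : Finset (Fin n)), (1 : ℝ)
      = n * (n - 1) * (n - 2) * (n - 3) / 24 := by
    simp only [Finset.sum_const, Finset.card_powersetCard, Finset.card_univ, Fintype.card_fin,
      nsmul_eq_mul, mul_one]
    have h := Nat.descFactorial_eq_factorial_mul_choose n 4
    obtain ⟨m, rfl⟩ := Nat.exists_eq_add_of_le' hn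
    have h' : ((m + 4).descFactorial 4 : ℝ) = 24 * ((m + 4).choose 4 : ℝ) := by
      rw [h]; push_cast; norm_num [Nat.factorial]
    simp [Nat.descFactorial] at h'
    push_cast
    linear_combination (-1 / 24 : ℝ) * h'
  have hone := aux_sum (n := n) (fun _ => (1 : ℝ))
  have hsum := aux_sum D
  rw [Finset.sum_congr rfl (fun f hf => (hpf f (Finset.mem_filter.mp hf).2).2),
    Finset.sum_sub_distrib, ← Finset.mul_sum] at hsum
  have hcyc : ∑ f ∈ Finset.univ.filter (fun f : Fin 4 → Fin n => Function.Injective f),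
      (cyc G (f 0) (f 1) (f 2) (f 3)
        + cyc G (f 0) (f 2) (f 1) (f 3) + cyc G (f 0) (f 1) (f 3) (f 2))
      = 3 * ((n : ℝ) * (n - 1) * (3 - n)) := by
    rw [Finset.sum_filter_of_ne]
    · rw [aux_tuple (fun i j k l => cyc G i j k l + cyc G i k j l + cyc G i j l k)]
      simp only [Finset.sum_add_distrib]
      have hc := aux_cycsum G hdiag hoff hs hcube
      have h2 : ∑ i, ∑ j, ∑ k, ∑ l, cyc G i k j l = ∑ i, ∑ j, ∑ k, ∑ l, cyc G i j k l :=
        Finset.sum_congr rfl fun i _ => Finset.sum_comm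
      have h3 : ∑ i, ∑ j, ∑ k, ∑ l, cyc G i j l k = ∑ i, ∑ j, ∑ k, ∑ l, cyc G i j k l :=
        Finset.sum_congr rfl fun i _ => Finset.sum_congr rfl fun j _ => Finset.sum_comm
      rw [h2, h3, hc]; ring
    · intro f _ hne
      by_contra hf
      apply hne
      rw [aux_inj] at hf
      unfold cyc
      rw [if_neg hf, if_neg (by rintro ⟨a, b, c, d, e, g⟩; exact hf ⟨b, a, c, d.symm, g, e⟩),
        if_neg (by rintro ⟨a, b, c, d, e, g⟩; exact hf ⟨a, c, b, e, d, g.symm⟩)]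
      norm_num
  have h3 : ∑ f ∈ Finset.univ.filter (fun f : Fin 4 → Fin n => Function.Injective f), (3 : ℝ)
      = 3 * (24 * (n * (n - 1) * (n - 2) * (n - 3) / 24)) := by
    rw [← hN, ← hone, Finset.mul_sum]; simp
  rw [hcyc, h3] at hsum
  rw [hcount, ← Finset.sum_div, Finset.sum_sub_distrib, hN]
  linear_combination (-1 / 192 : ℝ) * hsum

end
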